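/- arXiv:1109.3676 — 2 statements merged into one kernel-verified Lean document; each statement's English description precedes it below -/
import Mathlib

section
/- Let β ∈ (0,2], n ∈ ℕ, define φ₁(λ) = log(1 + λ^{β/2}) and φ_{k+1} = φ₁ ∘ φ_k, and let u_n : (0,∞) → (0,∞) be a decreasing function with ∫_0^∞ e^{−λt} u_n(t) dt = 1/φ_n(λ) for all λ > 0. For an integer d ≥ 3, define g_n(r) = ∫_0^∞ (4πt)^{−d/2} e^{−r²/(4t)} u_n(t) dt. Then g_n(r) ≍ r^{−d} (log_n(1/r))^{−2} · ∏_{k=1}^{n−1} (log_k(1/r))^{−1} as r → 0+ (the product being 1 when n = 1). -/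
open MeasureTheory Set Filter Topology

/-- Iterated geometric stable Laplace exponents: `phiIter β 1 λ = log(1 + λ^{β/2})` and
`phiIter β (n+1) = phiIter β 1 ∘ phiIter β n`. -/
noncomputable def phiIter (β : ℝ) : ℕ → ℝ → ℝ
  | 0, l => l
  | n + 1, l => Real.log (1 + phiIter β n l ^ (β / 2))

/-- Iterated logarithms: `iterLog 1 = log`, `iterLog (k+1) = log ∘ iterLog k`. -/
noncomputable def iterLog : ℕ → ℝ → ℝ
  | 0, x => x
  | n + 1, x => Real.log (iterLog n x)

/-!
By induction on `n`, the increment `φ_n(2l) - φ_n(l)` is of order `l / ∏_{k<n} φ_k(l)` as `l → ∞`: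
passing from `φ_k` to `φ_{k+1}` divides the increment by `φ_k`, as differentiating a logarithm
would. Hence `1/φ_n(l) - 1/φ_n(2l)` is of order `ℓ(l) = (φ_n² φ_1 ⋯ φ_{n-1})⁻¹(l)`.

This difference is `∫ (e^{-lt} - e^{-2lt}) u_n(t) dt`. The kernel concentrates at `t ≈ 1/l`, and
since `u_n` is decreasing and `ℓ` is nonincreasing and doubling, the contributions of much smaller
and much larger `t` can be absorbed; so `u_n(t)` is of order `ℓ(1/t)/t` as `t → 0+`.

The heat kernel concentrates the Green function integral at `t ≈ r²`, which makes `g_n(r)` of order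
`r^{-d} ℓ(r⁻²)`, and `φ_k(r⁻²)` is of order `log_k(1/r)` because the first logarithm turns powers
into constant factors.
-/

open Asymptotics

section Theta

variable {α : Type*} {l : Filter α} {f g x y : α → ℝ}

lemma isTheta_iff_exists_bounds (hf : ∀ᶠ i in l, 0 ≤ f i) (hg : ∀ᶠ i in l, 0 ≤ g i) :
    f =Θ[l] g ↔ ∃ c C : ℝ, 0 < c ∧ 0 < C ∧ ∀ᶠ i in l, c * g i ≤ f i ∧ f i ≤ C * g i := by
  constructor
  · rintro ⟨hfg, hgf⟩
    obtain ⟨C, hC, hfC⟩ := hfg.exists_pos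
    obtain ⟨c, hc, hgc⟩ := hgf.exists_pos
    refine ⟨c⁻¹, C, inv_pos.2 hc, hC, ?_⟩
    filter_upwards [hf, hg, hfC.bound, hgc.bound] with i hfi hgi hle hge
    rw [Real.norm_of_nonneg hfi, Real.norm_of_nonneg hgi] at hle hge
    exact ⟨(inv_mul_le_iff₀ hc).2 hge, hle⟩
  · rintro ⟨c, C, hc, -, h⟩
    refine ⟨.of_bound C ?_, .of_bound c⁻¹ ?_⟩ <;>
      filter_upwards [hf, hg, h] with i hfi hgi hi <;>
      rw [Real.norm_of_nonneg hfi, Real.norm_of_nonneg hgi]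
    exacts [hi.2, (le_inv_mul_iff₀ hc).2 hi.1]

lemma exists_bounds_of_isTheta_nhdsGT_zero {f g : ℝ → ℝ} (hf : ∀ᶠ r in 𝓝[>] 0, 0 ≤ f r)
    (hg : ∀ᶠ r in 𝓝[>] 0, 0 ≤ g r) (hfg : f =Θ[𝓝[>] 0] g) :
    ∃ c C r₀ : ℝ, 0 < c ∧ c ≤ C ∧ 0 < r₀ ∧
      ∀ r, 0 < r → r < r₀ → c * g r ≤ f r ∧ f r ≤ C * g r := by
  obtain ⟨c, C, hc, -, h⟩ := (isTheta_iff_exists_bounds hf hg).1 hfg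
  obtain ⟨r₀, hr₀, hr⟩ := mem_nhdsGT_iff_exists_Ioo_subset.1 (h.and hg)
  refine ⟨c, max c C, r₀, hc, le_max_left c C, hr₀, fun r hr0 hrr₀ => ?_⟩
  obtain ⟨⟨hge, hle⟩, hgr⟩ := hr ⟨hr0, hrr₀⟩
  exact ⟨hge, hle.trans (mul_le_mul_of_nonneg_right (le_max_right c C) hgr)⟩

lemma isBigO_log (hf : Tendsto f l atTop) (hg : Tendsto g l atTop) (hfg : f =O[l] g) :
    (fun i => Real.log (f i)) =O[l] fun i => Real.log (g i) := by
  obtain ⟨C, hC, hfC⟩ := hfg.exists_pos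
  refine .of_bound 2 ?_
  filter_upwards [hfC.bound, hf.eventually_ge_atTop 1, hg.eventually_ge_atTop 1,
    hg.eventually_ge_atTop C] with i hle hfi hgi hgC
  rw [Real.norm_of_nonneg (by linarith), Real.norm_of_nonneg (by linarith)] at hle
  rw [Real.norm_of_nonneg (Real.log_nonneg hfi), Real.norm_of_nonneg (Real.log_nonneg hgi)]
  calc Real.log (f i) ≤ Real.log (g i ^ 2) := Real.log_le_log (by linarith) (by nlinarith)
    _ = 2 * Real.log (g i) := by rw [Real.log_pow, Nat.cast_ofNat]

lemma isTheta_log (hf : Tendsto f l atTop) (hg : Tendsto g l atTop) (hfg : f =Θ[l] g) :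
    (fun i => Real.log (f i)) =Θ[l] fun i => Real.log (g i) :=
  ⟨isBigO_log hf hg hfg.1, isBigO_log hg hf hfg.2⟩

variable {a : ℝ}

lemma isTheta_log_one_add_rpow (ha : 0 < a) (hf : Tendsto f l atTop) :
    (fun i => Real.log (1 + f i ^ a)) =Θ[l] fun i => Real.log (f i) := by
  have hpow : Tendsto (fun i => f i ^ a) l atTop := (tendsto_rpow_atTop ha).comp hf
  have hone_add : (fun i => 1 + f i ^ a) =Θ[l] fun i => f i ^ a :=
    (isLittleO_const_left.2 (.inr (tendsto_norm_atTop_atTop.comp hpow))).add_isTheta isTheta_rfl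
  calc (fun i => Real.log (1 + f i ^ a))
      =Θ[l] fun i => Real.log (f i ^ a) :=
        isTheta_log (tendsto_atTop_add_const_left l 1 hpow) hpow hone_add
    _ =ᶠ[l] fun i => a * Real.log (f i) := by
        filter_upwards [hf.eventually_gt_atTop 0] with i hi using Real.log_rpow hi a
    _ =Θ[l] fun i => Real.log (f i) := (isTheta_const_mul_left ha.ne').2 isTheta_rfl

lemma log_one_add_sub_le {x y : ℝ} (hx : 0 < x) (hxy : x ≤ y) :
    Real.log (1 + y) - Real.log (1 + x) ≤ Real.log y - Real.log x := by
  have hy : 0 < y := hx.trans_le hxy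
  rw [← Real.log_div (by positivity) (by positivity), ← Real.log_div hy.ne' hx.ne']
  refine Real.log_le_log (by positivity) ?_
  rw [div_le_div_iff₀ (by positivity) hx]
  linarith

lemma half_log_sub_le {x y : ℝ} (hx : 1 ≤ x) (hxy : x ≤ y) :
    (Real.log y - Real.log x) / 2 ≤ Real.log (1 + y) - Real.log (1 + x) := by
  have hy : 1 ≤ y := hx.trans hxy
  have hprod : y * (1 + x) ^ 2 ≤ x * (1 + y) ^ 2 := by
    nlinarith [mul_nonneg (sub_nonneg.2 hxy) (sub_nonneg.2 (one_le_mul_of_one_le_of_one_le hx hy))]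
  have hlog := Real.log_le_log (by positivity) hprod
  rw [Real.log_mul (by positivity) (by positivity), Real.log_mul (by positivity) (by positivity),
    Real.log_pow, Real.log_pow, Nat.cast_ofNat] at hlog
  linarith

lemma isTheta_log_one_add_sub (hx : ∀ᶠ i in l, 1 ≤ x i) (hxy : ∀ᶠ i in l, x i ≤ y i) :
    (fun i => Real.log (1 + y i) - Real.log (1 + x i)) =Θ[l]
      fun i => Real.log (y i) - Real.log (x i) := by
  refine (isTheta_iff_exists_bounds ?_ ?_).2 ⟨1 / 2, 1, by norm_num, one_pos, ?_⟩ <;>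
    filter_upwards [hx, hxy] with i hxi hxyi
  · exact sub_nonneg.2 (Real.log_le_log (by linarith) (by linarith))
  · exact sub_nonneg.2 (Real.log_le_log (by linarith) hxyi)
  · have hlower := half_log_sub_le hxi hxyi
    have hupper := log_one_add_sub_le (by linarith) hxyi
    constructor <;> linarith

lemma isTheta_log_sub (hx : ∀ᶠ i in l, 0 < x i) (hxy : ∀ᶠ i in l, x i ≤ y i)
    (hyx : y =O[l] x) :
    (fun i => Real.log (y i) - Real.log (x i)) =Θ[l] fun i => (y i - x i) / x i := by
  obtain ⟨K, hK, hyK⟩ := hyx.exists_pos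
  refine (isTheta_iff_exists_bounds ?_ ?_).2 ⟨K⁻¹, 1, inv_pos.2 hK, one_pos, ?_⟩
  · filter_upwards [hx, hxy] with i hxi hxyi using sub_nonneg.2 (Real.log_le_log hxi hxyi)
  · filter_upwards [hx, hxy] with i hxi hxyi using div_nonneg (sub_nonneg.2 hxyi) hxi.le
  filter_upwards [hx, hxy, hyK.bound] with i hxi hxyi hyKi
  have hyi : 0 < y i := hxi.trans_le hxyi
  rw [Real.norm_of_nonneg hyi.le, Real.norm_of_nonneg hxi.le] at hyKi
  rw [← Real.log_div hyi.ne' hxi.ne']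
  constructor
  · calc K⁻¹ * ((y i - x i) / x i) = (y i - x i) / (K * x i) := by field_simp
      _ ≤ (y i - x i) / y i := div_le_div_of_nonneg_left (sub_nonneg.2 hxyi) hyi hyKi
      _ = 1 - (y i / x i)⁻¹ := by field_simp
      _ ≤ Real.log (y i / x i) := Real.one_sub_inv_le_log_of_pos (div_pos hyi hxi)
  · calc Real.log (y i / x i) ≤ y i / x i - 1 := Real.log_le_sub_one_of_pos (div_pos hyi hxi)
      _ = 1 * ((y i - x i) / x i) := by field_simp

lemma isTheta_log_one_add_rpow_sub (ha : 0 < a) (hx : Tendsto x l atTop)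
    (hxy : ∀ᶠ i in l, x i ≤ y i) (hyx : y =O[l] x) :
    (fun i => Real.log (1 + y i ^ a) - Real.log (1 + x i ^ a)) =Θ[l]
      fun i => (y i - x i) / x i := by
  have hx1 : ∀ᶠ i in l, 1 ≤ x i := hx.eventually_ge_atTop 1
  calc (fun i => Real.log (1 + y i ^ a) - Real.log (1 + x i ^ a))
      =Θ[l] fun i => Real.log (y i ^ a) - Real.log (x i ^ a) := by
        refine isTheta_log_one_add_sub ?_ ?_ <;> filter_upwards [hx1, hxy] with i hxi hxyi
        exacts [Real.one_le_rpow hxi ha.le, Real.rpow_le_rpow (by linarith) hxyi ha.le]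
    _ =ᶠ[l] fun i => a * (Real.log (y i) - Real.log (x i)) := by
        filter_upwards [hx1, hxy] with i hxi hxyi
        rw [Real.log_rpow (by linarith), Real.log_rpow (by linarith), mul_sub]
    _ =Θ[l] fun i => Real.log (y i) - Real.log (x i) :=
        (isTheta_const_mul_left ha.ne').2 isTheta_rfl
    _ =Θ[l] fun i => (y i - x i) / x i :=
        isTheta_log_sub (hx.eventually_gt_atTop 0) hxy hyx

end Theta

section Exponents

variable {β : ℝ}

lemma phiIter_pos (n : ℕ) {l : ℝ} (hl : 0 < l) : 0 < phiIter β n l := by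
  induction n with
  | zero => exact hl
  | succ n ih => exact Real.log_pos (lt_add_of_pos_right 1 (Real.rpow_pos_of_pos ih _))

lemma phiIter_monotoneOn (hβ : 0 < β) (n : ℕ) : MonotoneOn (phiIter β n) (Ioi 0) := by
  induction n with
  | zero => exact monotoneOn_id
  | succ n ih =>
    intro x hx y hy hxy
    have hpos : 0 < phiIter β n x := phiIter_pos n hx
    exact Real.log_le_log (by positivity)
      (add_le_add_right (Real.rpow_le_rpow hpos.le (ih hx hy hxy) (by positivity)) 1)

lemma tendsto_phiIter_atTop (hβ : 0 < β) (n : ℕ) : Tendsto (phiIter β n) atTop atTop := by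
  induction n with
  | zero => exact tendsto_id
  | succ n ih =>
    exact Real.tendsto_log_atTop.comp
      (tendsto_atTop_add_const_left _ 1 ((tendsto_rpow_atTop (half_pos hβ)).comp ih))

lemma tendsto_iterLog_atTop (n : ℕ) : Tendsto (iterLog n) atTop atTop := by
  induction n with
  | zero => exact tendsto_id
  | succ n ih => exact Real.tendsto_log_atTop.comp ih

lemma tendsto_two_mul_atTop : Tendsto (fun l : ℝ => 2 * l) atTop atTop :=
  tendsto_id.const_mul_atTop two_pos

lemma phiIter_two_mul_isTheta (hβ : 0 < β) (n : ℕ) :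
    (fun l => phiIter β n (2 * l)) =Θ[atTop] phiIter β n := by
  induction n with
  | zero => exact (isTheta_const_mul_left two_ne_zero).2 isTheta_rfl
  | succ n ih =>
    have hφ := tendsto_phiIter_atTop hβ n
    have hφ₂ := hφ.comp tendsto_two_mul_atTop
    exact (isTheta_log_one_add_rpow (half_pos hβ) hφ₂).trans
      ((isTheta_log hφ₂ hφ ih).trans (isTheta_log_one_add_rpow (half_pos hβ) hφ).symm)

lemma phiIter_sq_isTheta_iterLog (hβ : 0 < β) {n : ℕ} (hn : 1 ≤ n) :
    (fun l => phiIter β n (l ^ 2)) =Θ[atTop] iterLog n := by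
  have hφ (k : ℕ) : Tendsto (fun l => phiIter β k (l ^ 2)) atTop atTop :=
    (tendsto_phiIter_atTop hβ k).comp (tendsto_pow_atTop two_ne_zero)
  induction n, hn using Nat.le_induction with
  | base =>
    refine (isTheta_log_one_add_rpow (half_pos hβ) (hφ 0)).trans ?_
    simp only [phiIter, iterLog, Real.log_pow, Nat.cast_ofNat]
    exact (isTheta_const_mul_left two_ne_zero).2 isTheta_rfl
  | succ n _ ih =>
    exact (isTheta_log_one_add_rpow (half_pos hβ) (hφ n)).trans
      (isTheta_log (hφ n) (tendsto_iterLog_atTop n) ih)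

lemma phiIter_le_two_mul (hβ : 0 < β) (n : ℕ) {l : ℝ} (hl : 0 < l) :
    phiIter β n l ≤ phiIter β n (2 * l) :=
  phiIter_monotoneOn hβ n hl (mem_Ioi.2 (by positivity)) (by linarith)

lemma phiIter_two_mul_sub_isTheta (hβ : 0 < β) (n : ℕ) :
    (fun l => phiIter β n (2 * l) - phiIter β n l) =Θ[atTop]
      fun l => l / ∏ k ∈ Finset.range n, phiIter β k l := by
  induction n with
  | zero =>
    simp only [phiIter, Finset.range_zero, Finset.prod_empty, div_one, two_mul,
      add_sub_cancel_right]
    exact isTheta_rfl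
  | succ n ih =>
    simp only [Finset.prod_range_succ, ← div_div]
    refine (isTheta_log_one_add_rpow_sub (half_pos hβ) (tendsto_phiIter_atTop hβ n) ?_
      (phiIter_two_mul_isTheta hβ n).1).trans (ih.div isTheta_rfl)
    filter_upwards [eventually_gt_atTop 0] with l hl using phiIter_le_two_mul hβ n hl

/-- The weight `(f_n² f_1 ⋯ f_{n-1})⁻¹` of a sequence of functions. For `f = iterLog` it is the
logarithmic factor of the Green function, and for `f = phiIter β` it is the order of
`1 / φ_n(l) - 1 / φ_n(2l)`. -/
noncomputable def iterWeight {α : Type*} (f : ℕ → α → ℝ) (n : ℕ) (x : α) : ℝ :=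
  (f n x ^ 2 * ∏ k ∈ Finset.Icc 1 (n - 1), f k x)⁻¹

lemma isTheta_iterWeight {α : Type*} {l : Filter α} {f g : ℕ → α → ℝ} {n : ℕ} (hn : 1 ≤ n)
    (hfg : ∀ k, 1 ≤ k → f k =Θ[l] g k) : iterWeight f n =Θ[l] iterWeight g n :=
  (((hfg n hn).pow 2).mul (.finsetProd fun k hk => hfg k (Finset.mem_Icc.1 hk).1)).inv

lemma iterWeight_phiIter_nonneg (n : ℕ) {l : ℝ} (hl : 0 < l) :
    0 ≤ iterWeight (phiIter β) n l :=
  inv_nonneg.2 (mul_nonneg (sq_nonneg _) (Finset.prod_nonneg fun k _ => (phiIter_pos k hl).le))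

lemma iterWeight_phiIter_antitoneOn (hβ : 0 < β) (n : ℕ) :
    AntitoneOn (iterWeight (phiIter β) n) (Ioi 0) := by
  intro x hx y hy hxy
  have hpos (k : ℕ) : 0 < phiIter β k x := phiIter_pos k hx
  have hmono (k : ℕ) : phiIter β k x ≤ phiIter β k y := phiIter_monotoneOn hβ k hx hy hxy
  refine inv_anti₀ (mul_pos (pow_pos (hpos n) 2) (Finset.prod_pos fun k _ => hpos k)) ?_
  exact mul_le_mul (pow_le_pow_left₀ (hpos n).le (hmono n) 2)
    (Finset.prod_le_prod (fun k _ => (hpos k).le) fun k _ => hmono k)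
    (Finset.prod_nonneg fun k _ => (hpos k).le) (sq_nonneg _)

lemma iterWeight_phiIter_two_mul_isTheta (hβ : 0 < β) {n : ℕ} (hn : 1 ≤ n) :
    (fun l => iterWeight (phiIter β) n (2 * l)) =Θ[atTop] iterWeight (phiIter β) n :=
  isTheta_iterWeight hn fun k _ => phiIter_two_mul_isTheta hβ k

lemma iterWeight_phiIter_sq_isTheta (hβ : 0 < β) {n : ℕ} (hn : 1 ≤ n) :
    (fun l => iterWeight (phiIter β) n (l ^ 2)) =Θ[atTop] iterWeight iterLog n :=
  isTheta_iterWeight hn fun _ hk => phiIter_sq_isTheta_iterLog hβ hk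

lemma one_div_phiIter_sub_isTheta (hβ : 0 < β) {n : ℕ} (hn : 1 ≤ n) :
    (fun l => 1 / phiIter β n l - 1 / phiIter β n (2 * l)) =Θ[atTop]
      iterWeight (phiIter β) n := by
  calc (fun l => 1 / phiIter β n l - 1 / phiIter β n (2 * l))
      =ᶠ[atTop] fun l => (phiIter β n (2 * l) - phiIter β n l) /
        (phiIter β n l * phiIter β n (2 * l)) := by
        filter_upwards [eventually_gt_atTop 0] with l hl
        have hφ : 0 < phiIter β n l := phiIter_pos n hl
        have hφ₂ : 0 < phiIter β n (2 * l) := phiIter_pos n (by positivity)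
        field_simp
    _ =Θ[atTop] fun l => (l / ∏ k ∈ Finset.range n, phiIter β k l) /
        (phiIter β n l * phiIter β n l) :=
        (phiIter_two_mul_sub_isTheta hβ n).div
          (isTheta_rfl.mul (phiIter_two_mul_isTheta hβ n))
    _ =ᶠ[atTop] iterWeight (phiIter β) n := by
        filter_upwards [eventually_gt_atTop 0] with l hl
        have hIco : Finset.Icc 1 (n - 1) = Finset.Ico 1 n := by ext k; simp; omega
        rw [iterWeight, hIco, Finset.prod_range_eq_mul_Ico _ hn, phiIter,
          div_mul_cancel_left₀ hl.ne']
        ring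

end Exponents

lemma sub_mul_le_integral_Ioi {g : ℝ → ℝ} {a b c m : ℝ} (hca : c ≤ a) (hab : a ≤ b)
    (hg : IntegrableOn g (Ioi c)) (hg₀ : ∀ t, c < t → 0 ≤ g t) (hm : ∀ t ∈ Ioc a b, m ≤ g t) :
    (b - a) * m ≤ ∫ t in Ioi c, g t := by
  have hsub : Ioc a b ⊆ Ioi c := fun t ht => hca.trans_lt ht.1
  calc (b - a) * m = m * volume.real (Ioc a b) := by
        rw [Real.volume_real_Ioc_of_le hab, mul_comm]
    _ ≤ ∫ t in Ioc a b, g t :=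
        setIntegral_ge_of_const_le_real measurableSet_Ioc (by simp) hm (hg.mono_set hsub)
    _ ≤ ∫ t in Ioi c, g t :=
        setIntegral_mono_set hg (ae_restrict_of_forall_mem measurableSet_Ioi hg₀)
          hsub.eventuallyLE

section Tauberian

/-- The kernel `e⁻ˣ - e⁻²ˣ`: integrating `u` against its dilation by `l` gives the increment of the
Laplace transform of `u` between `2l` and `l`. -/
noncomputable def expDiff (x : ℝ) : ℝ := Real.exp (-x) - Real.exp (-(2 * x))

lemma expDiff_eq_mul (x : ℝ) : expDiff x = Real.exp (-x) * (1 - Real.exp (-x)) := by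
  rw [expDiff, mul_sub, mul_one, ← Real.exp_add, two_mul, neg_add]

variable {x δ : ℝ}

lemma expDiff_nonneg (hx : 0 ≤ x) : 0 ≤ expDiff x :=
  sub_nonneg.2 (Real.exp_le_exp.2 (by linarith))

lemma expDiff_le_one (hx : 0 ≤ x) : expDiff x ≤ 1 :=
  (sub_le_self _ (Real.exp_pos _).le).trans (Real.exp_le_one_iff.2 (neg_nonpos.2 hx))

lemma exp_neg_le_inv_one_add (hx : 0 ≤ x) : Real.exp (-x) ≤ (1 + x)⁻¹ := by
  rw [Real.exp_neg]
  exact inv_anti₀ (by positivity) (by linarith [Real.add_one_le_exp x])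

lemma expDiff_le_self (hx : 0 ≤ x) : expDiff x ≤ x := by
  have hexp : Real.exp (-x) ≤ 1 := Real.exp_le_one_iff.2 (neg_nonpos.2 hx)
  calc expDiff x = Real.exp (-x) * (1 - Real.exp (-x)) := expDiff_eq_mul x
    _ ≤ 1 * (1 - Real.exp (-x)) := mul_le_mul_of_nonneg_right hexp (sub_nonneg.2 hexp)
    _ ≤ x := by linarith [Real.one_sub_le_exp_neg x]

lemma div_six_le_expDiff (hx₀ : 0 ≤ x) (hx₁ : x ≤ 1) : x / 6 ≤ expDiff x := by
  have hexp : 1 / 3 ≤ Real.exp (-x) := calc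
    (1 / 3 : ℝ) ≤ (Real.exp 1)⁻¹ := by
      rw [one_div]; exact inv_anti₀ (Real.exp_pos 1) Real.exp_one_lt_three.le
    _ = Real.exp (-1) := (Real.exp_neg 1).symm
    _ ≤ Real.exp (-x) := Real.exp_le_exp.2 (by linarith)
  have hone_sub : x / 2 ≤ 1 - Real.exp (-x) := calc
    x / 2 ≤ x / (1 + x) := div_le_div_of_nonneg_left hx₀ (by positivity) (by linarith)
    _ = 1 - (1 + x)⁻¹ := by field_simp; ring
    _ ≤ 1 - Real.exp (-x) := sub_le_sub_left (exp_neg_le_inv_one_add hx₀) 1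
  calc x / 6 = 1 / 3 * (x / 2) := by ring
    _ ≤ Real.exp (-x) * (1 - Real.exp (-x)) := by gcongr
    _ = expDiff x := (expDiff_eq_mul x).symm

lemma expDiff_le_mul_expDiff_div (hδ : 0 < δ) (hx : 0 ≤ x) (hxδ : x ≤ δ) :
    expDiff x ≤ 6 * δ * expDiff (x / δ) := calc
  expDiff x ≤ x := expDiff_le_self hx
  _ = 6 * δ * (x / δ / 6) := by field_simp
  _ ≤ 6 * δ * expDiff (x / δ) := by
    gcongr
    exact div_six_le_expDiff (div_nonneg hx hδ.le) ((div_le_one hδ).2 hxδ)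

lemma expDiff_le_mul_expDiff_half (hδ : 0 < δ) (hx : δ⁻¹ ≤ x) :
    expDiff x ≤ 4 * δ * expDiff (x / 2) := by
  have hx₀ : 0 < x := (inv_pos.2 hδ).trans_le hx
  have hnonneg : 0 ≤ expDiff (x / 2) := expDiff_nonneg (by positivity)
  have hexp : Real.exp (-(x / 2)) ≤ 2 * δ := calc
    Real.exp (-(x / 2)) ≤ (1 + x / 2)⁻¹ := exp_neg_le_inv_one_add (by positivity)
    _ ≤ (δ⁻¹ / 2)⁻¹ := inv_anti₀ (by positivity) (by linarith)
    _ = 2 * δ := by field_simp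
  have hexp₁ : Real.exp (-(x / 2)) ≤ 1 := Real.exp_le_one_iff.2 (by linarith)
  have hfactor : expDiff x = Real.exp (-(x / 2)) * (1 + Real.exp (-(x / 2))) * expDiff (x / 2) := by
    have hsq : Real.exp (-x) = Real.exp (-(x / 2)) ^ 2 := by
      rw [← Real.exp_nat_mul]; congr 1; push_cast; ring
    rw [expDiff_eq_mul, expDiff_eq_mul, hsq]
    ring
  calc expDiff x = Real.exp (-(x / 2)) * (1 + Real.exp (-(x / 2))) * expDiff (x / 2) := hfactor
    _ ≤ 2 * δ * (1 + 1) * expDiff (x / 2) := by gcongr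
    _ = 4 * δ * expDiff (x / 2) := by ring

/-- The Laplace transform of a function on `(0, ∞)`. -/
noncomputable def laplaceTransform (u : ℝ → ℝ) (l : ℝ) : ℝ :=
  ∫ t in Ioi (0 : ℝ), Real.exp (-(l * t)) * u t

/-- Convergence of the Laplace integral of a function at every positive argument. -/
def LaplaceIntegrable (u : ℝ → ℝ) : Prop :=
  ∀ l, 0 < l → IntegrableOn (fun t => Real.exp (-(l * t)) * u t) (Ioi 0)

variable {u : ℝ → ℝ} {l : ℝ}

lemma expDiff_mul_eq (u : ℝ → ℝ) (l t : ℝ) :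
    expDiff (l * t) * u t = Real.exp (-(l * t)) * u t - Real.exp (-(2 * l * t)) * u t := by
  rw [expDiff, sub_mul, mul_assoc 2]

lemma LaplaceIntegrable.expDiff_mul (hint : LaplaceIntegrable u) (hl : 0 < l) :
    IntegrableOn (fun t => expDiff (l * t) * u t) (Ioi 0) := by
  simp only [expDiff_mul_eq]
  exact (hint l hl).sub (hint (2 * l) (by positivity))

lemma LaplaceIntegrable.integral_expDiff_mul (hint : LaplaceIntegrable u) (hl : 0 < l) :
    ∫ t in Ioi (0 : ℝ), expDiff (l * t) * u t =
      laplaceTransform u l - laplaceTransform u (2 * l) := by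
  simp only [expDiff_mul_eq]
  exact integral_sub (hint l hl) (hint (2 * l) (by positivity))

lemma LaplaceIntegrable.apply_inv_div_le (hint : LaplaceIntegrable u)
    (hu₀ : ∀ t, 0 < t → 0 ≤ u t) (hu : AntitoneOn u (Ioi 0)) (hl : 0 < l) :
    u l⁻¹ / (24 * l) ≤ laplaceTransform u l - laplaceTransform u (2 * l) := by
  have hhalf : (2 * l)⁻¹ ≤ l⁻¹ := inv_anti₀ hl (by linarith)
  have hlower : ∀ t ∈ Ioc (2 * l)⁻¹ l⁻¹, 1 / 12 * u l⁻¹ ≤ expDiff (l * t) * u t := by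
    rintro t ⟨ht_gt, ht_le⟩
    have ht : 0 < t := (inv_pos.2 (by positivity)).trans ht_gt
    have hlt_le : l * t ≤ 1 := (le_inv_mul_iff₀ hl).1 (by rwa [mul_one])
    have hlt_ge : 1 < 2 * l * t := (inv_mul_lt_iff₀ (by positivity)).1 (by rwa [mul_one])
    refine mul_le_mul ?_ (hu ht (inv_pos.2 hl) ht_le) (hu₀ _ (inv_pos.2 hl))
      (expDiff_nonneg (by positivity))
    linarith [div_six_le_expDiff (by positivity) hlt_le]
  calc u l⁻¹ / (24 * l) = (l⁻¹ - (2 * l)⁻¹) * (1 / 12 * u l⁻¹) := by field_simp; ring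
    _ ≤ ∫ t in Ioi (0 : ℝ), expDiff (l * t) * u t :=
        sub_mul_le_integral_Ioi (by positivity) hhalf (hint.expDiff_mul hl)
          (fun t ht => mul_nonneg (expDiff_nonneg (by positivity)) (hu₀ t ht)) hlower
    _ = laplaceTransform u l - laplaceTransform u (2 * l) := hint.integral_expDiff_mul hl

lemma expDiff_mul_le_add_indicator (hu₀ : ∀ t, 0 < t → 0 ≤ u t) (hu : AntitoneOn u (Ioi 0))
    (hδ : 0 < δ) (hl : 0 < l) {t : ℝ} (ht : 0 < t) :
    expDiff (l * t) * u t ≤ 6 * δ * (expDiff (l / δ * t) * u t) +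
      4 * δ * (expDiff (l / 2 * t) * u t) +
      (Ioc (δ / l) (δ⁻¹ / l)).indicator (fun _ => u (δ / l)) t := by
  have hut : 0 ≤ u t := hu₀ t ht
  have hdivδ : 0 ≤ 6 * δ * (expDiff (l * t / δ) * u t) :=
    mul_nonneg (by positivity) (mul_nonneg (expDiff_nonneg (by positivity)) hut)
  have hhalf : 0 ≤ 4 * δ * (expDiff (l * t / 2) * u t) :=
    mul_nonneg (by positivity) (mul_nonneg (expDiff_nonneg (by positivity)) hut)
  rw [div_mul_eq_mul_div, div_mul_eq_mul_div]
  by_cases htmem : t ∈ Ioc (δ / l) (δ⁻¹ / l)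
  · have hbound : expDiff (l * t) * u t ≤ 1 * u (δ / l) :=
      mul_le_mul (expDiff_le_one (by positivity))
        (hu (mem_Ioi.2 (by positivity)) ht htmem.1.le) hut zero_le_one
    rw [indicator_of_mem htmem]
    linarith
  rw [indicator_of_notMem htmem, add_zero]
  rcases le_or_gt t (δ / l) with hsmall | hlarge
  · have hle := mul_le_mul_of_nonneg_right
      (expDiff_le_mul_expDiff_div hδ (x := l * t) (by positivity) ((le_div_iff₀' hl).1 hsmall)) hut
    linarith
  · have hgt : δ⁻¹ / l < t := not_le.1 fun hle => htmem ⟨hlarge, hle⟩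
    have hle := mul_le_mul_of_nonneg_right
      (expDiff_le_mul_expDiff_half hδ ((div_lt_iff₀' hl).1 hgt).le) hut
    linarith

-- The contributions of `t ≤ δ / l` and of `t > δ⁻¹ / l` to the increment of the Laplace transform
-- at `l` are small multiples of its increments at `l / δ` and `l / 2`.
lemma LaplaceIntegrable.laplaceTransform_sub_le (hint : LaplaceIntegrable u)
    (hu₀ : ∀ t, 0 < t → 0 ≤ u t) (hu : AntitoneOn u (Ioi 0)) (hδ : 0 < δ) (hδ₁ : δ ≤ 1)
    (hl : 0 < l) :
    laplaceTransform u l - laplaceTransform u (2 * l) ≤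
      6 * δ * (laplaceTransform u (l / δ) - laplaceTransform u (2 * (l / δ))) +
      4 * δ * (laplaceTransform u (l / 2) - laplaceTransform u (2 * (l / 2))) +
      δ⁻¹ * (u (δ / l) / l) := by
  have hlδ : 0 < l / δ := by positivity
  have hl2 : 0 < l / 2 := by positivity
  have hsub : Ioc (δ / l) (δ⁻¹ / l) ⊆ Ioi 0 := fun t ht => (by positivity : 0 < δ / l).trans ht.1
  have hle : δ / l ≤ δ⁻¹ / l :=
    div_le_div_of_nonneg_right (hδ₁.trans ((one_le_inv₀ hδ).2 hδ₁)) hl.le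
  have hintδ := (hint.expDiff_mul hlδ).const_mul (6 * δ)
  have hint2 := (hint.expDiff_mul hl2).const_mul (4 * δ)
  have hint_sum : IntegrableOn (fun t => 6 * δ * (expDiff (l / δ * t) * u t) +
      4 * δ * (expDiff (l / 2 * t) * u t)) (Ioi 0) := hintδ.add hint2
  have hint_ind : IntegrableOn ((Ioc (δ / l) (δ⁻¹ / l)).indicator fun _ => u (δ / l)) (Ioi 0) :=
    ((integrable_indicator_iff measurableSet_Ioc).2 (integrableOn_const (by simp))).integrableOn
  rw [← hint.integral_expDiff_mul hl, ← hint.integral_expDiff_mul hlδ,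
    ← hint.integral_expDiff_mul hl2]
  refine (setIntegral_mono_on (hint.expDiff_mul hl) (hint_sum.add hint_ind)
    measurableSet_Ioi fun t ht => expDiff_mul_le_add_indicator hu₀ hu hδ hl ht).trans ?_
  rw [integral_add' hint_sum hint_ind, integral_add hintδ hint2, integral_const_mul,
    integral_const_mul, setIntegral_indicator measurableSet_Ioc,
    inter_eq_self_of_subset_right hsub, setIntegral_const, smul_eq_mul,
    Real.volume_real_Ioc_of_le hle]
  have hlength : (δ⁻¹ / l - δ / l) * u (δ / l) ≤ δ⁻¹ / l * u (δ / l) :=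
    mul_le_mul_of_nonneg_right (sub_le_self _ (by positivity)) (hu₀ _ (by positivity))
  calc _ ≤ _ := add_le_add_right hlength _
    _ = _ := by ring

variable {ℓ : ℝ → ℝ}

lemma LaplaceIntegrable.laplaceTransform_sub_nonneg (hint : LaplaceIntegrable u)
    (hu₀ : ∀ t, 0 < t → 0 ≤ u t) (hl : 0 < l) :
    0 ≤ laplaceTransform u l - laplaceTransform u (2 * l) := by
  rw [← hint.integral_expDiff_mul hl]
  exact setIntegral_nonneg measurableSet_Ioi fun t (ht : 0 < t) =>
    mul_nonneg (expDiff_nonneg (by positivity)) (hu₀ t ht)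

lemma LaplaceIntegrable.exists_isBigO_apply_div (hint : LaplaceIntegrable u)
    (hu₀ : ∀ t, 0 < t → 0 ≤ u t) (hu : AntitoneOn u (Ioi 0)) (hℓ₀ : ∀ l, 0 < l → 0 ≤ ℓ l)
    (hℓ : AntitoneOn ℓ (Ioi 0)) (hdouble : ℓ =O[atTop] fun l => ℓ (2 * l))
    (hsub : (fun l => laplaceTransform u l - laplaceTransform u (2 * l)) =Θ[atTop] ℓ) :
    ∃ δ : ℝ, 0 < δ ∧ δ ≤ 1 ∧ ℓ =O[atTop] fun l => u (δ / l) / l := by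
  have hpos : ∀ᶠ l : ℝ in atTop, 0 < l := eventually_gt_atTop 0
  obtain ⟨c, C, hc, hC, hbound⟩ := (isTheta_iff_exists_bounds
    (hpos.mono fun l hl => hint.laplaceTransform_sub_nonneg hu₀ hl) (hpos.mono hℓ₀)).1 hsub
  obtain ⟨K, hK, hℓK⟩ := hdouble.exists_pos
  obtain ⟨δ, hδ, hδ_lt⟩ : ∃ δ : ℝ, 0 < δ ∧ δ < min 1 (c / (2 * (6 * C + 4 * C * K))) :=
    exists_between (lt_min one_pos (by positivity))
  obtain ⟨hδ₁, hδ_small⟩ := lt_min_iff.1 hδ_lt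
  rw [lt_div_iff₀ (by positivity)] at hδ_small
  refine ⟨δ, hδ, hδ₁.le, .of_bound (2 / c * δ⁻¹) ?_⟩
  filter_upwards [hpos, hbound, (tendsto_id.atTop_div_const hδ).eventually hbound,
    (tendsto_id.atTop_div_const two_pos).eventually (hbound.and hℓK.bound)]
    with l hl ⟨hlower, _⟩ ⟨_, hupperδ⟩ ⟨⟨_, hupper2⟩, hℓ2⟩
  simp only [id_eq] at hupperδ hupper2 hℓ2
  have hℓδ : ℓ (l / δ) ≤ ℓ l :=
    hℓ hl (div_pos hl hδ) ((le_div_iff₀ hδ).2 (mul_le_of_le_one_right hl.le hδ₁.le))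
  rw [mul_div_cancel₀ l two_ne_zero, Real.norm_of_nonneg (hℓ₀ l hl),
    Real.norm_of_nonneg (hℓ₀ _ (half_pos hl))] at hℓ2
  rw [Real.norm_of_nonneg (hℓ₀ l hl),
    Real.norm_of_nonneg (div_nonneg (hu₀ _ (div_pos hδ hl)) hl.le), mul_assoc, div_mul_eq_mul_div,
    le_div_iff₀ hc]
  have habsorb : c * ℓ l ≤ c / 2 * ℓ l + δ⁻¹ * (u (δ / l) / l) := calc
    c * ℓ l ≤ laplaceTransform u l - laplaceTransform u (2 * l) := hlower
    _ ≤ _ := hint.laplaceTransform_sub_le hu₀ hu hδ hδ₁.le hl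
    _ ≤ 6 * δ * (C * ℓ l) + 4 * δ * (C * (K * ℓ l)) + δ⁻¹ * (u (δ / l) / l) := by
      gcongr
      exacts [hupperδ.trans (by gcongr), hupper2.trans (by gcongr)]
    _ ≤ c / 2 * ℓ l + δ⁻¹ * (u (δ / l) / l) := by
      linarith [mul_le_mul_of_nonneg_right hδ_small.le (hℓ₀ l hl)]
  linarith

theorem LaplaceIntegrable.isTheta_nhdsGT_zero (hint : LaplaceIntegrable u)
    (hu₀ : ∀ t, 0 < t → 0 ≤ u t) (hu : AntitoneOn u (Ioi 0)) (hℓ₀ : ∀ l, 0 < l → 0 ≤ ℓ l)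
    (hℓ : AntitoneOn ℓ (Ioi 0)) (hdouble : ℓ =O[atTop] fun l => ℓ (2 * l))
    (hsub : (fun l => laplaceTransform u l - laplaceTransform u (2 * l)) =Θ[atTop] ℓ) :
    u =Θ[𝓝[>] 0] fun t => ℓ t⁻¹ / t := by
  constructor
  · have hinc : (fun t => laplaceTransform u t⁻¹ - laplaceTransform u (2 * t⁻¹))
        =O[𝓝[>] 0] fun t => ℓ t⁻¹ := hsub.1.comp_tendsto tendsto_inv_nhdsGT_zero
    refine (IsBigO.of_bound 24 ?_).trans (hinc.mul (isBigO_refl (·⁻¹) _))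
    filter_upwards [self_mem_nhdsWithin] with t (ht : 0 < t)
    have hle := hint.apply_inv_div_le hu₀ hu (inv_pos.2 ht)
    rw [inv_inv, div_le_iff₀ (by positivity)] at hle
    rw [Real.norm_of_nonneg (hu₀ t ht), Real.norm_of_nonneg
      (mul_nonneg (hint.laplaceTransform_sub_nonneg hu₀ (inv_pos.2 ht)) (inv_pos.2 ht).le)]
    linarith
  · obtain ⟨δ, hδ, hδ₁, hℓu⟩ := hint.exists_isBigO_apply_div hu₀ hu hℓ₀ hℓ hdouble hsub
    have hδ_tendsto : Tendsto (fun t => δ * t⁻¹) (𝓝[>] 0) atTop :=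
      tendsto_inv_nhdsGT_zero.const_mul_atTop hδ
    have hℓδ : (fun t => ℓ t⁻¹) =O[𝓝[>] 0] fun t => ℓ (δ * t⁻¹) := by
      refine .of_bound 1 ?_
      filter_upwards [self_mem_nhdsWithin] with t (ht : 0 < t)
      rw [Real.norm_of_nonneg (hℓ₀ _ (by positivity)),
        Real.norm_of_nonneg (hℓ₀ _ (by positivity)), one_mul]
      exact hℓ (mem_Ioi.2 (by positivity)) (mem_Ioi.2 (by positivity))
        (mul_le_of_le_one_left (by positivity) hδ₁)
    refine ((hℓδ.trans (hℓu.comp_tendsto hδ_tendsto)).mul (isBigO_refl (·⁻¹) _)).trans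
      (IsBigO.of_bound δ⁻¹ ?_)
    filter_upwards [self_mem_nhdsWithin] with t (ht : 0 < t)
    have hcancel : u (δ / (δ * t⁻¹)) / (δ * t⁻¹) * t⁻¹ = δ⁻¹ * u t := by
      rw [div_mul_cancel_left₀ hδ.ne', inv_inv]
      field_simp
    simp only [Function.comp_apply, hcancel, norm_mul, norm_inv, Real.norm_of_nonneg hδ.le, le_refl]

end Tauberian

section Green

/-- The Gauss–Weierstrass kernel at time `t` and distance `r` in dimension `d`, which may be any
real number. -/
noncomputable def heatKernel (d r t : ℝ) : ℝ :=
  (4 * Real.pi * t) ^ (-d / 2) * Real.exp (-(r ^ 2 / (4 * t)))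

/-- The radial profile of the Green function of the Brownian motion subordinated by a process with
potential density `u`. -/
noncomputable def greenProfile (d : ℝ) (u : ℝ → ℝ) (r : ℝ) : ℝ :=
  ∫ t in Ioi (0 : ℝ), heatKernel d r t * u t

variable {d r t : ℝ}

lemma heatKernel_nonneg (ht : 0 ≤ t) : 0 ≤ heatKernel d r t := by
  unfold heatKernel
  positivity

lemma measurable_heatKernel (d r : ℝ) : Measurable (heatKernel d r) := by
  unfold heatKernel
  fun_prop

lemma rpow_mul_exp_neg_le {s x : ℝ} (hs : 0 < s) (hx : 0 ≤ x) :
    x ^ s * Real.exp (-x) ≤ s ^ s := by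
  have hle : x / s ≤ Real.exp (x / s) := by linarith [Real.add_one_le_exp (x / s)]
  have hpow : x ^ s ≤ s ^ s * Real.exp x := calc
    x ^ s = s ^ s * (x / s) ^ s := by
      rw [← Real.mul_rpow hs.le (by positivity), mul_div_cancel₀ x hs.ne']
    _ ≤ s ^ s * Real.exp (x / s) ^ s := by gcongr
    _ = s ^ s * Real.exp x := by rw [← Real.exp_mul, div_mul_cancel₀ x hs.ne']
  rwa [Real.exp_neg, ← div_eq_mul_inv, div_le_iff₀ (Real.exp_pos x)]

lemma heatKernel_le_rpow_mul_exp (hd : 0 ≤ d) (ht : 0 < t) :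
    heatKernel d r t ≤ t ^ (-d / 2) * Real.exp (-(r ^ 2 / (4 * t))) := by
  refine mul_le_mul_of_nonneg_right
    (Real.rpow_le_rpow_of_nonpos ht ?_ (by linarith)) (Real.exp_pos _).le
  nlinarith [Real.pi_gt_three]

lemma heatKernel_le_rpow (hd : 0 ≤ d) (ht : 0 < t) : heatKernel d r t ≤ t ^ (-d / 2) :=
  (heatKernel_le_rpow_mul_exp hd ht).trans
    (mul_le_of_le_one_right (by positivity) (Real.exp_le_one_iff.2 (neg_nonpos.2 (by positivity))))

lemma heatKernel_le_mul (hd : 0 ≤ d) (hr : 0 < r) (ht : 0 < t) :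
    heatKernel d r t ≤ (4 * (d / 2 + 1)) ^ (d / 2 + 1) * (r ^ 2) ^ (-(d / 2 + 1)) * t := by
  have hs : 0 < d / 2 + 1 := by positivity
  calc heatKernel d r t ≤ t ^ (-d / 2) * Real.exp (-(r ^ 2 / (4 * t))) :=
        heatKernel_le_rpow_mul_exp hd ht
    _ = 4 ^ (d / 2 + 1) * ((r ^ 2 / (4 * t)) ^ (d / 2 + 1) * Real.exp (-(r ^ 2 / (4 * t)))) *
        (r ^ 2) ^ (-(d / 2 + 1)) * t := by
        have htpow : t ^ (-d / 2) = (t ^ (d / 2 + 1))⁻¹ * t := by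
          rw [← Real.rpow_neg ht.le, ← Real.rpow_add_one ht.ne']
          congr 1
          ring
        rw [htpow, Real.div_rpow (by positivity) (by positivity),
          Real.mul_rpow (by positivity) ht.le, Real.rpow_neg (by positivity)]
        field_simp
    _ ≤ 4 ^ (d / 2 + 1) * (d / 2 + 1) ^ (d / 2 + 1) * (r ^ 2) ^ (-(d / 2 + 1)) * t := by
        gcongr
        exact rpow_mul_exp_neg_le hs (by positivity)
    _ = (4 * (d / 2 + 1)) ^ (d / 2 + 1) * (r ^ 2) ^ (-(d / 2 + 1)) * t := by
        rw [Real.mul_rpow (by norm_num) hs.le]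

lemma le_heatKernel (hd : 0 ≤ d) (hr : 0 < r) (ht : t ∈ Ioc (r ^ 2) (2 * r ^ 2)) :
    (8 * Real.pi) ^ (-d / 2) * Real.exp (-(1 / 4)) * (r ^ 2) ^ (-d / 2) ≤ heatKernel d r t := by
  have ht₀ : 0 < t := (by positivity : 0 < r ^ 2).trans ht.1
  have hbase : 4 * Real.pi * t ≤ 8 * Real.pi * r ^ 2 := by nlinarith [Real.pi_pos, ht.2]
  have hexp : r ^ 2 / (4 * t) ≤ 1 / 4 := by
    rw [div_le_iff₀ (by positivity)]
    linarith [ht.1]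
  calc (8 * Real.pi) ^ (-d / 2) * Real.exp (-(1 / 4)) * (r ^ 2) ^ (-d / 2)
      = (8 * Real.pi * r ^ 2) ^ (-d / 2) * Real.exp (-(1 / 4)) := by
        rw [Real.mul_rpow (y := r ^ 2) (by positivity) (by positivity), mul_right_comm]
    _ ≤ heatKernel d r t := mul_le_mul
        (Real.rpow_le_rpow_of_nonpos (by positivity) hbase (by linarith))
        (Real.exp_le_exp.2 (neg_le_neg hexp)) (Real.exp_pos _).le (by positivity)

lemma sq_rpow_neg_half (d : ℝ) (hr : 0 < r) : (r ^ 2) ^ (-d / 2) = r ^ (-d) := by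
  rw [← Real.rpow_natCast_mul hr.le, Nat.cast_ofNat, mul_div_cancel₀ _ two_ne_zero]

variable {u : ℝ → ℝ} {B : ℝ}

lemma heatKernel_mul_le_of_le_sq (hd : 0 ≤ d) (hr : 0 < r)
    (hB : ∀ t ∈ Ioc 0 (r ^ 2), t * u t ≤ B) (ht : t ∈ Ioc 0 (r ^ 2)) (hut : 0 ≤ u t) :
    heatKernel d r t * u t ≤ (4 * (d / 2 + 1)) ^ (d / 2 + 1) * (r ^ 2) ^ (-(d / 2 + 1)) * B := calc
  heatKernel d r t * u t
    ≤ (4 * (d / 2 + 1)) ^ (d / 2 + 1) * (r ^ 2) ^ (-(d / 2 + 1)) * t * u t :=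
      mul_le_mul_of_nonneg_right (heatKernel_le_mul hd hr ht.1) hut
  _ = (4 * (d / 2 + 1)) ^ (d / 2 + 1) * (r ^ 2) ^ (-(d / 2 + 1)) * (t * u t) := mul_assoc _ _ _
  _ ≤ (4 * (d / 2 + 1)) ^ (d / 2 + 1) * (r ^ 2) ^ (-(d / 2 + 1)) * B :=
      mul_le_mul_of_nonneg_left (hB t ht) (by positivity)

lemma heatKernel_mul_le_of_sq_lt (hd : 0 ≤ d) (hr : 0 < r) (hu₀ : ∀ t, 0 < t → 0 ≤ u t)
    (hu : AntitoneOn u (Ioi 0)) (hB : ∀ t ∈ Ioc 0 (r ^ 2), t * u t ≤ B) (ht : r ^ 2 < t) :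
    heatKernel d r t * u t ≤ t ^ (-d / 2) * (B / r ^ 2) := by
  have hr₂ : 0 < r ^ 2 := by positivity
  have ht₀ : 0 < t := hr₂.trans ht
  refine mul_le_mul (heatKernel_le_rpow hd ht₀) ?_ (hu₀ t ht₀) (by positivity)
  exact (hu hr₂ ht₀ ht.le).trans ((le_div_iff₀' hr₂).2 (hB _ ⟨hr₂, le_rfl⟩))

lemma integrableOn_heatKernel_mul (hd : 2 < d) (hr : 0 < r) (hu₀ : ∀ t, 0 < t → 0 ≤ u t)
    (hu : AntitoneOn u (Ioi 0)) (hB : ∀ t ∈ Ioc 0 (r ^ 2), t * u t ≤ B) :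
    IntegrableOn (fun t => heatKernel d r t * u t) (Ioi 0) := by
  have hd₀ : 0 ≤ d := by linarith
  have hr₂ : 0 < r ^ 2 := by positivity
  have hmeas : AEStronglyMeasurable (fun t => heatKernel d r t * u t) (volume.restrict (Ioi 0)) :=
    ((measurable_heatKernel d r).aemeasurable.mul
      (aemeasurable_restrict_of_antitoneOn measurableSet_Ioi hu)).aestronglyMeasurable
  have hnorm {t : ℝ} (ht : 0 < t) : ‖heatKernel d r t * u t‖ = heatKernel d r t * u t :=
    Real.norm_of_nonneg (mul_nonneg (heatKernel_nonneg ht.le) (hu₀ t ht))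
  rw [← Ioc_union_Ioi_eq_Ioi hr₂.le]
  refine .union ?_ ?_
  · refine .of_bound (by simp) (hmeas.mono_set Ioc_subset_Ioi_self)
      ((4 * (d / 2 + 1)) ^ (d / 2 + 1) * (r ^ 2) ^ (-(d / 2 + 1)) * B)
      (ae_restrict_of_forall_mem measurableSet_Ioc fun t ht => ?_)
    exact (hnorm ht.1).trans_le (heatKernel_mul_le_of_le_sq hd₀ hr hB ht (hu₀ t ht.1))
  · have htail : IntegrableOn (fun t : ℝ => t ^ (-d / 2)) (Ioi (r ^ 2)) :=
      integrableOn_Ioi_rpow_of_lt (by linarith) hr₂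
    refine (htail.mul_const (B / r ^ 2)).mono'
      (hmeas.mono_set (Ioi_subset_Ioi hr₂.le))
      (ae_restrict_of_forall_mem measurableSet_Ioi fun t ht => ?_)
    exact (hnorm (hr₂.trans ht)).trans_le (heatKernel_mul_le_of_sq_lt hd₀ hr hu₀ hu hB ht)

lemma setIntegral_Ioc_heatKernel_mul_le (hd : 0 ≤ d) (hr : 0 < r) (hu₀ : ∀ t, 0 < t → 0 ≤ u t)
    (hB : ∀ t ∈ Ioc 0 (r ^ 2), t * u t ≤ B)
    (hint : IntegrableOn (fun t => heatKernel d r t * u t) (Ioc 0 (r ^ 2))) :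
    ∫ t in Ioc 0 (r ^ 2), heatKernel d r t * u t ≤
      (4 * (d / 2 + 1)) ^ (d / 2 + 1) * (r ^ (-d) * B) := by
  have hr₂ : 0 < r ^ 2 := by positivity
  calc ∫ t in Ioc 0 (r ^ 2), heatKernel d r t * u t
      ≤ ∫ _ in Ioc 0 (r ^ 2), (4 * (d / 2 + 1)) ^ (d / 2 + 1) * (r ^ 2) ^ (-(d / 2 + 1)) * B :=
        setIntegral_mono_on hint (integrableOn_const (by simp)) measurableSet_Ioc
          fun t ht => heatKernel_mul_le_of_le_sq hd hr hB ht (hu₀ t ht.1)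
    _ = (4 * (d / 2 + 1)) ^ (d / 2 + 1) * ((r ^ 2) ^ (-(d / 2 + 1)) * r ^ 2 * B) := by
        rw [setIntegral_const, Real.volume_real_Ioc_of_le hr₂.le, smul_eq_mul]
        ring
    _ = (4 * (d / 2 + 1)) ^ (d / 2 + 1) * (r ^ (-d) * B) := by
        rw [← Real.rpow_add_one hr₂.ne', ← sq_rpow_neg_half d hr,
          show -(d / 2 + 1) + 1 = -d / 2 by ring]

lemma setIntegral_Ioi_heatKernel_mul_le (hd : 2 < d) (hr : 0 < r) (hu₀ : ∀ t, 0 < t → 0 ≤ u t)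
    (hu : AntitoneOn u (Ioi 0)) (hB : ∀ t ∈ Ioc 0 (r ^ 2), t * u t ≤ B)
    (hint : IntegrableOn (fun t => heatKernel d r t * u t) (Ioi (r ^ 2))) :
    ∫ t in Ioi (r ^ 2), heatKernel d r t * u t ≤ (d / 2 - 1)⁻¹ * (r ^ (-d) * B) := by
  have hr₂ : 0 < r ^ 2 := by positivity
  have hd₂ : -d / 2 < -1 := by linarith
  calc ∫ t in Ioi (r ^ 2), heatKernel d r t * u t
      ≤ ∫ t in Ioi (r ^ 2), t ^ (-d / 2) * (B / r ^ 2) :=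
        setIntegral_mono_on hint ((integrableOn_Ioi_rpow_of_lt hd₂ hr₂).mul_const _)
          measurableSet_Ioi fun t ht =>
            heatKernel_mul_le_of_sq_lt (by linarith) hr hu₀ hu hB ht
    _ = (d / 2 - 1)⁻¹ * (r ^ (-d) * B) := by
        rw [integral_mul_const, integral_Ioi_rpow_of_lt hd₂ hr₂, Real.rpow_add_one hr₂.ne',
          sq_rpow_neg_half d hr, show -d / 2 + 1 = -(d / 2 - 1) by ring, neg_div_neg_eq]
        field_simp

lemma greenProfile_le (hd : 2 < d) (hr : 0 < r) (hu₀ : ∀ t, 0 < t → 0 ≤ u t)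
    (hu : AntitoneOn u (Ioi 0)) (hB : ∀ t ∈ Ioc 0 (r ^ 2), t * u t ≤ B) :
    greenProfile d u r ≤
      ((4 * (d / 2 + 1)) ^ (d / 2 + 1) + (d / 2 - 1)⁻¹) * (r ^ (-d) * B) := by
  have hr₂ : 0 < r ^ 2 := by positivity
  have hint := integrableOn_heatKernel_mul hd hr hu₀ hu hB
  have hint_Ioc : IntegrableOn (fun t => heatKernel d r t * u t) (Ioc 0 (r ^ 2)) :=
    hint.mono_set Ioc_subset_Ioi_self
  have hint_Ioi := hint.mono_set (Ioi_subset_Ioi hr₂.le)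
  rw [greenProfile, ← Ioc_union_Ioi_eq_Ioi hr₂.le,
    setIntegral_union Ioc_disjoint_Ioi_same measurableSet_Ioi hint_Ioc hint_Ioi, add_mul]
  exact add_le_add (setIntegral_Ioc_heatKernel_mul_le (by linarith) hr hu₀ hB hint_Ioc)
    (setIntegral_Ioi_heatKernel_mul_le hd hr hu₀ hu hB hint_Ioi)

lemma le_greenProfile (hd : 0 ≤ d) (hr : 0 < r) (hu₀ : ∀ t, 0 < t → 0 ≤ u t)
    (hu : AntitoneOn u (Ioi 0))
    (hint : IntegrableOn (fun t => heatKernel d r t * u t) (Ioi 0)) :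
    (8 * Real.pi) ^ (-d / 2) * Real.exp (-(1 / 4)) * (r ^ (-d) * (r ^ 2 * u (2 * r ^ 2))) ≤
      greenProfile d u r := by
  have hr₂ : 0 < r ^ 2 := by positivity
  have hu2 : 0 ≤ u (2 * r ^ 2) := hu₀ _ (by positivity)
  calc (8 * Real.pi) ^ (-d / 2) * Real.exp (-(1 / 4)) * (r ^ (-d) * (r ^ 2 * u (2 * r ^ 2)))
      = (2 * r ^ 2 - r ^ 2) * ((8 * Real.pi) ^ (-d / 2) * Real.exp (-(1 / 4)) *
        (r ^ 2) ^ (-d / 2) * u (2 * r ^ 2)) := by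
        rw [sq_rpow_neg_half d hr]
        ring
    _ ≤ greenProfile d u r := by
        refine sub_mul_le_integral_Ioi hr₂.le (by linarith) hint
          (fun t ht => mul_nonneg (heatKernel_nonneg ht.le) (hu₀ t ht)) fun t ht => ?_
        have ht₀ : 0 < t := hr₂.trans ht.1
        exact mul_le_mul (le_heatKernel hd hr ht) (hu ht₀ (mem_Ioi.2 (by positivity)) ht.2) hu2
          (heatKernel_nonneg ht₀.le)

lemma greenProfile_nonneg (hu₀ : ∀ t, 0 < t → 0 ≤ u t) (d r : ℝ) : 0 ≤ greenProfile d u r :=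
  setIntegral_nonneg measurableSet_Ioi fun t (ht : 0 < t) =>
    mul_nonneg (heatKernel_nonneg ht.le) (hu₀ t ht)

variable {ℓ : ℝ → ℝ}

lemma exists_eventually_mul_le_of_isBigO (hℓ₀ : ∀ l, 0 < l → 0 ≤ ℓ l)
    (hℓ : AntitoneOn ℓ (Ioi 0)) (huℓ : u =O[𝓝[>] 0] fun t => ℓ t⁻¹ / t) :
    ∃ C, ∀ᶠ s in 𝓝[>] 0, ∀ t ∈ Ioc 0 s, t * u t ≤ C * ℓ s⁻¹ := by
  obtain ⟨C, hC, huC⟩ := huℓ.exists_pos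
  obtain ⟨t₀, ht₀, hbound⟩ := mem_nhdsGT_iff_exists_Ioo_subset.1 huC.bound
  refine ⟨C, ?_⟩
  filter_upwards [Ioo_mem_nhdsGT ht₀] with s ⟨hs, hst₀⟩ t ⟨ht, hts⟩
  have hut : |u t| ≤ C * |ℓ t⁻¹ / t| := hbound ⟨ht, hts.trans_lt hst₀⟩
  rw [abs_of_nonneg (div_nonneg (hℓ₀ _ (inv_pos.2 ht)) ht.le)] at hut
  calc t * u t ≤ t * (C * (ℓ t⁻¹ / t)) := by
        gcongr
        exact (le_abs_self _).trans hut
    _ = C * ℓ t⁻¹ := by field_simp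
    _ ≤ C * ℓ s⁻¹ := by
        gcongr
        exact hℓ (inv_pos.2 hs) (inv_pos.2 ht) (inv_anti₀ ht hts)

lemma tendsto_nhdsGT_zero_of_continuous {f : ℝ → ℝ} (hf : Continuous f) (hf_zero : f 0 = 0)
    (hf_pos : ∀ r, 0 < r → 0 < f r) : Tendsto f (𝓝[>] 0) (𝓝[>] 0) :=
  tendsto_nhdsWithin_iff.2 ⟨(hf.tendsto' 0 0 hf_zero).mono_left nhdsWithin_le_nhds,
    eventually_mem_nhdsWithin.mono hf_pos⟩

lemma isBigO_mul_apply_two_mul (hℓ₀ : ∀ l, 0 < l → 0 ≤ ℓ l) (hℓ : AntitoneOn ℓ (Ioi 0))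
    (hℓu : (fun t => ℓ t⁻¹ / t) =O[𝓝[>] 0] u) :
    (fun s => ℓ s⁻¹) =O[𝓝[>] 0] fun s => s * u (2 * s) := by
  have htwo : Tendsto (fun s : ℝ => 2 * s) (𝓝[>] 0) (𝓝[>] 0) :=
    tendsto_nhdsGT_zero_of_continuous (by fun_prop) (mul_zero 2) fun _ hs => mul_pos two_pos hs
  refine IsBigO.trans (.of_bound 2 ?_)
    ((isBigO_refl (fun s : ℝ => s) _).mul (hℓu.comp_tendsto htwo))
  filter_upwards [self_mem_nhdsWithin] with s (hs : 0 < s)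
  have hℓ2 : 0 ≤ ℓ (2 * s)⁻¹ := hℓ₀ _ (by positivity)
  have hle : ℓ s⁻¹ ≤ ℓ (2 * s)⁻¹ :=
    hℓ (mem_Ioi.2 (by positivity)) (mem_Ioi.2 (by positivity)) (inv_anti₀ hs (by linarith))
  rw [Function.comp_apply, Real.norm_of_nonneg (hℓ₀ _ (inv_pos.2 hs)),
    Real.norm_of_nonneg (by positivity)]
  calc ℓ s⁻¹ ≤ ℓ (2 * s)⁻¹ := hle
    _ = 2 * (s * (ℓ (2 * s)⁻¹ / (2 * s))) := by field_simp

theorem greenProfile_isTheta (hd : 2 < d) (hu₀ : ∀ t, 0 < t → 0 ≤ u t)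
    (hu : AntitoneOn u (Ioi 0)) (hℓ₀ : ∀ l, 0 < l → 0 ≤ ℓ l) (hℓ : AntitoneOn ℓ (Ioi 0))
    (huℓ : u =Θ[𝓝[>] 0] fun t => ℓ t⁻¹ / t) :
    greenProfile d u =Θ[𝓝[>] 0] fun r => r ^ (-d) * ℓ (r ^ 2)⁻¹ := by
  have hpos : ∀ᶠ r : ℝ in 𝓝[>] 0, 0 < r := self_mem_nhdsWithin
  have hsq : Tendsto (fun r : ℝ => r ^ 2) (𝓝[>] 0) (𝓝[>] 0) :=
    tendsto_nhdsGT_zero_of_continuous (by fun_prop) (zero_pow two_ne_zero) fun _ hr => pow_pos hr 2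
  obtain ⟨C, hC⟩ := exists_eventually_mul_le_of_isBigO hℓ₀ hℓ huℓ.1
  have hB := hsq.eventually hC
  constructor
  · refine .of_bound (((4 * (d / 2 + 1)) ^ (d / 2 + 1) + (d / 2 - 1)⁻¹) * C) ?_
    filter_upwards [hpos, hB] with r hr hBr
    rw [Real.norm_of_nonneg (greenProfile_nonneg hu₀ d r),
      Real.norm_of_nonneg (mul_nonneg (by positivity) (hℓ₀ _ (by positivity)))]
    calc greenProfile d u r ≤ _ := greenProfile_le hd hr hu₀ hu hBr
      _ = _ := by ring
  · refine ((isBigO_refl (fun r : ℝ => r ^ (-d)) _).mul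
      ((isBigO_mul_apply_two_mul hℓ₀ hℓ huℓ.2).comp_tendsto hsq)).trans
      (.of_bound ((8 * Real.pi) ^ (-d / 2) * Real.exp (-(1 / 4)))⁻¹ ?_)
    filter_upwards [hpos, hB] with r hr hBr
    have hu2 : 0 ≤ u (2 * r ^ 2) := hu₀ _ (by positivity)
    rw [Function.comp_apply, Real.norm_of_nonneg (greenProfile_nonneg hu₀ d r),
      Real.norm_of_nonneg (by positivity), le_inv_mul_iff₀ (by positivity)]
    exact le_greenProfile (by linarith) hr hu₀ hu (integrableOn_heatKernel_mul hd hr hu₀ hu hBr)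

end Green

section GreenAsymptotics

variable {β : ℝ} {n : ℕ} {u : ℝ → ℝ}

lemma laplaceIntegrable_of_one_div_phiIter
    (hun : ∀ l, 0 < l → laplaceTransform u l = 1 / phiIter β n l) : LaplaceIntegrable u :=
  fun l hl => .of_integral_ne_zero ((hun l hl).trans_ne (one_div_ne_zero (phiIter_pos n hl).ne'))

theorem greenProfile_isTheta_iterWeight (hβ : 0 < β) (hn : 1 ≤ n)
    (hu₀ : ∀ t, 0 < t → 0 ≤ u t) (hu : AntitoneOn u (Ioi 0))
    (hun : ∀ l, 0 < l → laplaceTransform u l = 1 / phiIter β n l) {d : ℝ} (hd : 2 < d) :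
    greenProfile d u =Θ[𝓝[>] 0] fun r => r ^ (-d) * iterWeight iterLog n r⁻¹ := by
  have hweight₀ : ∀ l, 0 < l → 0 ≤ iterWeight (phiIter β) n l :=
    fun l hl => iterWeight_phiIter_nonneg n hl
  have hsub : (fun l => laplaceTransform u l - laplaceTransform u (2 * l)) =Θ[atTop]
      iterWeight (phiIter β) n := by
    refine EventuallyEq.trans_isTheta ?_ (one_div_phiIter_sub_isTheta hβ hn)
    filter_upwards [eventually_gt_atTop 0] with l hl
    rw [hun l hl, hun (2 * l) (by positivity)]
  have hpotential : u =Θ[𝓝[>] 0] fun t => iterWeight (phiIter β) n t⁻¹ / t :=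
    (laplaceIntegrable_of_one_div_phiIter hun).isTheta_nhdsGT_zero hu₀ hu hweight₀
      (iterWeight_phiIter_antitoneOn hβ n) (iterWeight_phiIter_two_mul_isTheta hβ hn).2 hsub
  refine (greenProfile_isTheta hd hu₀ hu hweight₀ (iterWeight_phiIter_antitoneOn hβ n)
    hpotential).trans (isTheta_rfl.mul ?_)
  have hsq := iterWeight_phiIter_sq_isTheta hβ hn
  simp only [← inv_pow]
  exact ⟨hsq.1.comp_tendsto tendsto_inv_nhdsGT_zero, hsq.2.comp_tendsto tendsto_inv_nhdsGT_zero⟩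

lemma rpow_div_iterLog_sq_mul_prod_eq (n : ℕ) (d r : ℝ) :
    r ^ (-d) / iterLog n (1 / r) ^ 2 * ∏ k ∈ Finset.Icc 1 (n - 1), (iterLog k (1 / r))⁻¹ =
      r ^ (-d) * iterWeight iterLog n r⁻¹ := by
  rw [iterWeight, one_div, Finset.prod_inv_distrib, mul_inv, div_eq_mul_inv, mul_assoc]

lemma eventually_nonneg_iterWeight_iterLog (n : ℕ) :
    ∀ᶠ x in atTop, 0 ≤ iterWeight iterLog n x := by
  have hpos : ∀ᶠ x in atTop, ∀ k ∈ Finset.Icc 1 (n - 1), 0 ≤ iterLog k x :=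
    (Filter.eventually_all_finset _).2 fun k _ => (tendsto_iterLog_atTop k).eventually_ge_atTop 0
  exact hpos.mono fun x hx => inv_nonneg.2 (mul_nonneg (sq_nonneg _) (Finset.prod_nonneg hx))

end GreenAsymptotics

theorem iterated_geometric_stable_green_asymp_general
    (β : ℝ) (hβ0 : 0 < β) (n : ℕ) (hn : 1 ≤ n) (un : ℝ → ℝ)
    (hu₀ : ∀ t, 0 < t → 0 ≤ un t)
    (hudec : ∀ s t, 0 < s → s ≤ t → un t ≤ un s)
    (hun : ∀ l, 0 < l →
      ∫ t in Ioi (0 : ℝ), Real.exp (-(l * t)) * un t = 1 / phiIter β n l)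
    (d : ℝ) (hd : 2 < d)
    (gn : ℝ → ℝ)
    (hg : ∀ r, 0 < r → gn r =
      ∫ t in Ioi (0 : ℝ), (4 * Real.pi * t) ^ (-d / 2) * Real.exp (-(r ^ 2 / (4 * t))) * un t) :
    ∃ c C r₀ : ℝ, 0 < c ∧ c ≤ C ∧ 0 < r₀ ∧ ∀ r, 0 < r → r < r₀ →
      c * (r ^ (-d) / iterLog n (1 / r) ^ 2 *
          ∏ k ∈ Finset.Icc 1 (n - 1), (iterLog k (1 / r))⁻¹) ≤ gn r ∧
      gn r ≤ C * (r ^ (-d) / iterLog n (1 / r) ^ 2 *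
          ∏ k ∈ Finset.Icc 1 (n - 1), (iterLog k (1 / r))⁻¹) := by
  have hgreen : ∀ᶠ r in 𝓝[>] 0, gn r = greenProfile d un r := eventually_mem_nhdsWithin.mono hg
  have htheta : gn =Θ[𝓝[>] 0] fun r => r ^ (-d) * iterWeight iterLog n r⁻¹ :=
    EventuallyEq.trans_isTheta hgreen <| greenProfile_isTheta_iterWeight hβ0 hn hu₀
      (fun s hs t _ hst => hudec s t hs hst) hun hd
  simp only [rpow_div_iterLog_sq_mul_prod_eq]
  refine exists_bounds_of_isTheta_nhdsGT_zero ?_ ?_ htheta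
  · exact hgreen.mono fun r hr => hr ▸ greenProfile_nonneg hu₀ d r
  · filter_upwards [eventually_mem_nhdsWithin,
      tendsto_inv_nhdsGT_zero.eventually (eventually_nonneg_iterWeight_iterLog n)] with r hr hw
    exact mul_nonneg (Real.rpow_nonneg (mem_Ioi.1 hr).le _) hw

/-- The Green function profile of the iterated geometric stable process satisfies
`g_n(r) ≍ r^{-d} (log_n(1/r))^{-2} ∏_{k=1}^{n-1} (log_k(1/r))⁻¹` as `r → 0+`. -/
theorem iterated_geometric_stable_green_asymp
    (β : ℝ) (hβ0 : 0 < β) (hβ2 : β ≤ 2)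
    (n : ℕ) (hn : 1 ≤ n)
    (un : ℝ → ℝ)
    (hupos : ∀ t, 0 < t → 0 < un t)
    (hudec : ∀ s t, 0 < s → s ≤ t → un t ≤ un s)
    (hun : ∀ l, 0 < l →
      ∫ t in Ioi (0:ℝ), Real.exp (-(l * t)) * un t = 1 / phiIter β n l)
    (d : ℕ) (hd : 3 ≤ d)
    (gn : ℝ → ℝ)
    (hg : ∀ r, 0 < r → gn r =
      ∫ t in Ioi (0:ℝ), (4 * Real.pi * t) ^ (-(d:ℝ) / 2) * Real.exp (-(r ^ 2 / (4 * t))) * un t) :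
    ∃ c C r₀ : ℝ, 0 < c ∧ c ≤ C ∧ 0 < r₀ ∧ ∀ r, 0 < r → r < r₀ →
      c * (r ^ (-(d:ℝ)) / iterLog n (1 / r) ^ 2 *
          ∏ k ∈ Finset.Icc 1 (n - 1), (iterLog k (1 / r))⁻¹) ≤ gn r ∧
      gn r ≤ C * (r ^ (-(d:ℝ)) / iterLog n (1 / r) ^ 2 *
          ∏ k ∈ Finset.Icc 1 (n - 1), (iterLog k (1 / r))⁻¹) :=
  iterated_geometric_stable_green_asymp_general β hβ0 n hn un (fun t ht => (hupos t ht).le)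
    hudec hun d (by exact_mod_cast hd) gn hg
end

section
/- Assume condition (A-1) holds with some index α ∈ [0,1). Then there is a constant c > 0 such that ∫_0^r φ(t^{−2}) dt ≤ c · r · φ(r^{−2}) for every r ∈ (0,1). -/
/-!
Choose `γ` strictly between `max (α / 2) 0` and `1 / 2`, and any `b > 1`. By (A-1), eventually
`b φ'(lb) ≤ b ^ γ φ'(l)`, so `l ↦ φ(lb) - b ^ γ φ(l)` is eventually decreasing and
`φ(lb) ≤ b ^ γ φ(l) + C`. The constant `C` is absorbed by passing to `φ + C / (b ^ γ - 1)`, and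
iterating along the powers of `b` gives the Potter-type bound `φ(lx) ≤ K x ^ γ φ(l)` for
`l, x ≥ 1`. With `l = r⁻²` and `x = (r / t) ^ 2` this bounds the integrand by
`K φ(r⁻²) (r / t) ^ (2γ)`, which is integrable at `0` because `2γ < 1`.
-/

open MeasureTheory Set Filter Topology

/-- The weak upper scaling condition at infinity with exponent `γ` and constant `K`, with the
threshold normalized to `1`. -/
def WeakUpperScaling (φ : ℝ → ℝ) (γ K : ℝ) : Prop :=
  ∀ l x : ℝ, 1 ≤ l → 1 ≤ x → φ (l * x) ≤ K * x ^ γ * φ l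

/-- The Bernstein function with Lévy density `μ` on `(0, ∞)`, without killing or drift. -/
noncomputable def bernsteinFunction (μ : ℝ → ℝ) (l : ℝ) : ℝ :=
  ∫ t in Ioi (0 : ℝ), (1 - Real.exp (-(l * t))) * μ t

section Scaling

variable {φ φ' : ℝ → ℝ} {b q γ K C L : ℝ}

lemma apply_mul_pow_le (hb : 1 ≤ b) (hq : 0 ≤ q)
    (h : ∀ l, 1 ≤ l → φ (l * b) ≤ q * φ l) {l : ℝ} (hl : 1 ≤ l) (n : ℕ) :
    φ (l * b ^ n) ≤ q ^ n * φ l := by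
  induction n with
  | zero => simp
  | succ n ih =>
    calc φ (l * b ^ (n + 1)) = φ (l * b ^ n * b) := by rw [pow_succ, mul_assoc]
      _ ≤ q * φ (l * b ^ n) := h _ (one_le_mul_of_one_le_of_one_le hl (one_le_pow₀ hb))
      _ ≤ q * (q ^ n * φ l) := by gcongr
      _ = q ^ (n + 1) * φ l := by ring

lemma weakUpperScaling_of_apply_mul_le (hb : 1 < b) (hγ : 0 ≤ γ) (hmono : MonotoneOn φ (Ici 1))
    (hnonneg : 0 ≤ φ 1) (h : ∀ l, 1 ≤ l → φ (l * b) ≤ b ^ γ * φ l) :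
    WeakUpperScaling φ γ (b ^ γ) := by
  intro l x hl hx
  have hb0 : 0 < b := one_pos.trans hb
  have hφl : 0 ≤ φ l := hnonneg.trans (hmono self_mem_Ici hl hl)
  obtain ⟨n, hnx, hxn⟩ := exists_nat_pow_near hx hb
  have hle : l * x ≤ l * b ^ (n + 1) := by gcongr
  calc φ (l * x) ≤ φ (l * b ^ (n + 1)) := by
        have hlx : 1 ≤ l * x := one_le_mul_of_one_le_of_one_le hl hx
        exact hmono hlx (hlx.trans hle) hle
    _ ≤ (b ^ γ) ^ (n + 1) * φ l := apply_mul_pow_le hb.le (by positivity) h hl _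
    _ = b ^ γ * (b ^ n) ^ γ * φ l := by rw [pow_succ', Real.rpow_pow_comm hb0.le]
    _ ≤ b ^ γ * x ^ γ * φ l := by gcongr

lemma exists_weakUpperScaling_of_apply_mul_le_add (hb : 1 < b) (hγ : 0 < γ) (hC : 0 ≤ C)
    (hmono : MonotoneOn φ (Ici 1)) (hpos : 0 < φ 1)
    (h : ∀ l, 1 ≤ l → φ (l * b) ≤ b ^ γ * φ l + C) :
    ∃ K, 0 < K ∧ WeakUpperScaling φ γ K := by
  have : 0 < b := one_pos.trans hb
  have hq : 0 < b ^ γ - 1 := sub_pos.2 (Real.one_lt_rpow hb hγ)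
  set D := C / (b ^ γ - 1) with hD
  have hD0 : 0 ≤ D := by positivity
  have hCD : C = (b ^ γ - 1) * D := by rw [hD, mul_div_cancel₀ _ hq.ne']
  have hshift : WeakUpperScaling (fun l => φ l + D) γ (b ^ γ) :=
    weakUpperScaling_of_apply_mul_le hb hγ.le (hmono.add_const D) (by positivity)
      fun l hl => by linarith [h l hl]
  refine ⟨b ^ γ * (1 + D / φ 1), by positivity, fun l x hl hx => ?_⟩
  have hDl : D ≤ D / φ 1 * φ l := by
    rw [div_mul_comm]
    exact le_mul_of_one_le_left hD0 ((one_le_div hpos).2 (hmono self_mem_Ici hl hl))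
  calc φ (l * x) ≤ φ (l * x) + D := le_add_of_nonneg_right hD0
    _ ≤ b ^ γ * x ^ γ * (φ l + D) := hshift l x hl hx
    _ ≤ b ^ γ * x ^ γ * (φ l + D / φ 1 * φ l) := by gcongr
    _ = b ^ γ * (1 + D / φ 1) * x ^ γ * φ l := by ring

lemma antitoneOn_apply_mul_sub (hderiv : ∀ l, L ≤ l → HasDerivAt φ (φ' l) l)
    (hderivb : ∀ l, L ≤ l → HasDerivAt φ (φ' (l * b)) (l * b))
    (h : ∀ l, L ≤ l → b * φ' (l * b) ≤ q * φ' l) :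
    AntitoneOn (fun l => φ (l * b) - q * φ l) (Ici L) := by
  have hg : ∀ l, L ≤ l →
      HasDerivAt (fun l => φ (l * b) - q * φ l) (φ' (l * b) * b - q * φ' l) l := fun l hl =>
    ((hderivb l hl).comp l (hasDerivAt_mul_const b)).sub ((hderiv l hl).const_mul q)
  refine antitoneOn_of_hasDerivWithinAt_nonpos (convex_Ici L)
    (fun l hl => (hg l hl).continuousAt.continuousWithinAt)
    (fun l hl => (hg l (interior_subset hl)).hasDerivWithinAt) fun l hl => ?_
  linarith [h l (interior_subset hl)]

lemma exists_apply_mul_le_add (hb : 0 < b) (hq : 0 ≤ q) (hmono : MonotoneOn φ (Ioi 0))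
    (hnonneg : ∀ l, 0 < l → 0 ≤ φ l) (hderiv : ∀ l, 0 < l → HasDerivAt φ (φ' l) l)
    (h : ∀ᶠ l in atTop, b * φ' (l * b) ≤ q * φ' l) :
    ∃ C, 0 ≤ C ∧ ∀ l, 0 < l → φ (l * b) ≤ q * φ l + C := by
  obtain ⟨L, hL⟩ := eventually_atTop.1 (h.and (eventually_gt_atTop 0))
  have hL0 : 0 < L := (hL L le_rfl).2
  have hanti := antitoneOn_apply_mul_sub (fun l hl => hderiv l (hL l hl).2)
    (fun l hl => hderiv (l * b) (mul_pos (hL l hl).2 hb)) (fun l hl => (hL l hl).1)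
  refine ⟨φ (L * b), hnonneg _ (by positivity), fun l hl => ?_⟩
  rcases le_total l L with hlL | hLl
  · have hle : φ (l * b) ≤ φ (L * b) :=
      hmono (mul_pos hl hb) (mul_pos hL0 hb) (by gcongr)
    linarith [mul_nonneg hq (hnonneg l hl)]
  · have hle : φ (l * b) - q * φ l ≤ φ (L * b) - q * φ L := hanti self_mem_Ici hLl hLl
    linarith [mul_nonneg hq (hnonneg L hL0)]

lemma eventually_le_mul_of_tendsto_div {ι : Type*} {F : Filter ι} {f g : ι → ℝ} {a : ℝ}
    (ha : 0 < a) (haq : a < q) (hg : ∀ᶠ x in F, 0 ≤ g x)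
    (h : Tendsto (fun x => f x / g x) F (𝓝 a)) : ∀ᶠ x in F, f x ≤ q * g x := by
  filter_upwards [hg, h.eventually_lt_const haq, h.eventually_const_lt ha] with x hgx hlt hpos
  have hgx' : g x ≠ 0 := fun h0 => by simp [h0] at hpos
  exact ((div_lt_iff₀ (hgx.lt_of_ne' hgx')).1 hlt).le

end Scaling

section Integral

lemma div_rpow_eq_mul_rpow_neg {r t : ℝ} (hr : 0 ≤ r) (ht : 0 ≤ t) (s : ℝ) :
    (r / t) ^ s = r ^ s * t ^ (-s) := by
  rw [Real.div_rpow hr ht, Real.rpow_neg ht, div_eq_mul_inv]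

lemma integrableOn_div_rpow {r s : ℝ} (hr : 0 ≤ r) (hs : s < 1) :
    IntegrableOn (fun t : ℝ => (r / t) ^ s) (Ioo 0 r) := by
  have hint : IntegrableOn (fun t : ℝ => t ^ (-s)) (Ioo 0 r) :=
    (intervalIntegrable_iff_integrableOn_Ioo_of_le hr).1
      (intervalIntegral.intervalIntegrable_rpow' (by linarith))
  exact IntegrableOn.congr_fun (hint.const_mul (r ^ s))
    (fun t ht => (div_rpow_eq_mul_rpow_neg hr ht.1.le s).symm) measurableSet_Ioo

lemma setIntegral_div_rpow {r s : ℝ} (hr : 0 < r) (hs : s < 1) :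
    ∫ t in Ioo 0 r, (r / t) ^ s = r / (1 - s) := by
  have hs' : -s + 1 ≠ 0 := by linarith
  calc ∫ t in Ioo 0 r, (r / t) ^ s = ∫ t in Ioo 0 r, r ^ s * t ^ (-s) :=
        setIntegral_congr_fun measurableSet_Ioo fun t ht =>
          div_rpow_eq_mul_rpow_neg hr.le ht.1.le s
    _ = r ^ s * ∫ t in (0 : ℝ)..r, t ^ (-s) := by
        rw [integral_const_mul, ← integral_Ioc_eq_integral_Ioo,
          intervalIntegral.integral_of_le hr.le]
    _ = r ^ s * (r ^ (-s + 1) / (-s + 1)) := by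
        rw [integral_rpow (Or.inl (by linarith)), Real.zero_rpow hs', sub_zero]
    _ = r / (1 - s) := by
        rw [mul_div_assoc', ← Real.rpow_add hr, add_neg_cancel_left, Real.rpow_one,
          neg_add_eq_sub]

variable {φ : ℝ → ℝ} {γ K p r : ℝ}

lemma WeakUpperScaling.apply_rpow_neg_le (h : WeakUpperScaling φ γ K) (hp : 0 ≤ p) {t : ℝ}
    (ht : 0 < t) (htr : t ≤ r) (hr : r ≤ 1) :
    φ (t ^ (-p)) ≤ K * φ (r ^ (-p)) * (r / t) ^ (p * γ) := by
  have hr0 : 0 < r := ht.trans_le htr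
  have hsplit : t ^ (-p) = r ^ (-p) * (r / t) ^ p := by
    rw [div_rpow_eq_mul_rpow_neg hr0.le ht.le, ← mul_assoc, ← Real.rpow_add hr0, neg_add_cancel,
      Real.rpow_zero, one_mul]
  calc φ (t ^ (-p)) = φ (r ^ (-p) * (r / t) ^ p) := by rw [hsplit]
    _ ≤ K * ((r / t) ^ p) ^ γ * φ (r ^ (-p)) :=
        h _ _ (Real.one_le_rpow_of_pos_of_le_one_of_nonpos hr0 hr (neg_nonpos.2 hp))
          (Real.one_le_rpow ((one_le_div ht).2 htr) hp)
    _ = K * φ (r ^ (-p)) * (r / t) ^ (p * γ) := by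
        rw [← Real.rpow_mul (by positivity), mul_right_comm]

lemma WeakUpperScaling.setIntegral_rpow_neg_le (h : WeakUpperScaling φ γ K)
    (hnonneg : ∀ l, 1 ≤ l → 0 ≤ φ l) (hp : 0 ≤ p) (hpγ : p * γ < 1) (hr0 : 0 < r) (hr : r ≤ 1) :
    ∫ t in Ioo 0 r, φ (t ^ (-p)) ≤ K / (1 - p * γ) * r * φ (r ^ (-p)) := by
  calc ∫ t in Ioo 0 r, φ (t ^ (-p))
      ≤ ∫ t in Ioo 0 r, K * φ (r ^ (-p)) * (r / t) ^ (p * γ) := by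
        refine integral_mono_of_nonneg ?_ ((integrableOn_div_rpow hr0.le hpγ).const_mul _) ?_
        · filter_upwards [ae_restrict_mem measurableSet_Ioo] with t ht
          exact hnonneg _ (Real.one_le_rpow_of_pos_of_le_one_of_nonpos ht.1
            (ht.2.le.trans hr) (neg_nonpos.2 hp))
        · filter_upwards [ae_restrict_mem measurableSet_Ioo] with t ht
          exact h.apply_rpow_neg_le hp ht.1 ht.2.le hr
    _ = K / (1 - p * γ) * r * φ (r ^ (-p)) := by
        rw [integral_const_mul, setIntegral_div_rpow hr0 hpγ]
        ring

end Integral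

section Bernstein

variable {μ : ℝ → ℝ} {l t : ℝ}

lemma one_sub_exp_neg_mul_le (l : ℝ) (ht : 0 ≤ t) :
    1 - Real.exp (-(l * t)) ≤ max 1 l * min 1 t := by
  rw [mul_min_of_nonneg _ _ (le_max_of_le_left zero_le_one), mul_one]
  refine le_min ?_ ?_
  · exact (sub_le_self 1 (Real.exp_nonneg _)).trans (le_max_left 1 l)
  · calc 1 - Real.exp (-(l * t)) ≤ l * t := by linarith [Real.one_sub_le_exp_neg (l * t)]
      _ ≤ max 1 l * t := by gcongr; exact le_max_right 1 l

lemma mul_exp_neg_le_one_sub_exp_neg (x : ℝ) : x * Real.exp (-x) ≤ 1 - Real.exp (-x) := by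
  have h : (x + 1) * Real.exp (-x) ≤ Real.exp x * Real.exp (-x) := by
    gcongr
    exact Real.add_one_le_exp x
  rw [← Real.exp_add, add_neg_cancel, Real.exp_zero] at h
  linarith

lemma one_sub_exp_neg_mul_pos (hl : 0 < l) (ht : 0 < t) : 0 < 1 - Real.exp (-(l * t)) :=
  sub_pos.2 (Real.exp_lt_one_iff.2 (neg_lt_zero.2 (mul_pos hl ht)))

lemma aemeasurable_of_integrableOn_min_one_mul
    (hint : IntegrableOn (fun t => min 1 t * μ t) (Ioi 0)) :
    AEMeasurable μ (volume.restrict (Ioi 0)) := by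
  have hmeas : AEMeasurable (fun t => (min 1 t)⁻¹ * (min 1 t * μ t)) (volume.restrict (Ioi 0)) :=
    AEMeasurable.mul (by fun_prop) hint.aemeasurable
  refine hmeas.congr ?_
  filter_upwards [ae_restrict_mem measurableSet_Ioi] with t ht
  exact inv_mul_cancel_left₀ (lt_min one_pos ht).ne' (μ t)

lemma integrableOn_one_sub_exp_neg_mul
    (hint : IntegrableOn (fun t => min 1 t * μ t) (Ioi 0)) (hl : 0 ≤ l) :
    IntegrableOn (fun t => (1 - Real.exp (-(l * t))) * μ t) (Ioi 0) := by
  have hμ := aemeasurable_of_integrableOn_min_one_mul hint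
  refine (hint.norm.const_mul (max 1 l)).mono'
    (AEMeasurable.mul (by fun_prop) hμ).aestronglyMeasurable ?_
  filter_upwards [ae_restrict_mem measurableSet_Ioi] with t ht
  have ht0 : 0 < t := ht
  have hnonneg : 0 ≤ 1 - Real.exp (-(l * t)) :=
    sub_nonneg.2 (Real.exp_le_one_iff.2 (neg_nonpos.2 (by positivity)))
  rw [norm_mul, norm_mul, Real.norm_of_nonneg hnonneg,
    Real.norm_of_nonneg (le_min zero_le_one ht0.le), ← mul_assoc]
  gcongr
  exact one_sub_exp_neg_mul_le l ht0.le

lemma bernsteinFunction_pos (hpos : ∀ t, 0 < t → 0 < μ t)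
    (hint : IntegrableOn (fun t => min 1 t * μ t) (Ioi 0)) (hl : 0 < l) :
    0 < bernsteinFunction μ l := by
  have hintegrand : ∀ t ∈ Ioi (0 : ℝ), 0 < (1 - Real.exp (-(l * t))) * μ t := fun t ht =>
    mul_pos (one_sub_exp_neg_mul_pos hl ht) (hpos t ht)
  have hsupp : Ioi (0 : ℝ) ⊆ Function.support fun t => (1 - Real.exp (-(l * t))) * μ t :=
    fun t ht => (hintegrand t ht).ne'
  rw [bernsteinFunction, setIntegral_pos_iff_support_of_nonneg_ae
    (ae_restrict_of_forall_mem measurableSet_Ioi fun t ht => (hintegrand t ht).le)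
    (integrableOn_one_sub_exp_neg_mul hint hl.le), inter_eq_right.2 hsupp, Real.volume_Ioi]
  exact ENNReal.zero_lt_top

lemma mul_exp_neg_mul_le_of_le {x : ℝ} (hl : 0 < l) (hlx : l ≤ x) (ht : 0 ≤ t) :
    t * Real.exp (-(x * t)) ≤ l⁻¹ * (1 - Real.exp (-(l * t))) := by
  calc t * Real.exp (-(x * t)) ≤ t * Real.exp (-(l * t)) := by gcongr
    _ = l⁻¹ * (l * t * Real.exp (-(l * t))) := by field_simp
    _ ≤ l⁻¹ * (1 - Real.exp (-(l * t))) := by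
        gcongr
        exact mul_exp_neg_le_one_sub_exp_neg (l * t)

lemma hasDerivAt_bernsteinFunction
    (hint : IntegrableOn (fun t => min 1 t * μ t) (Ioi 0)) (hl : 0 < l) :
    HasDerivAt (bernsteinFunction μ) (∫ t in Ioi (0 : ℝ), t * Real.exp (-(l * t)) * μ t) l := by
  have hμ := aemeasurable_of_integrableOn_min_one_mul hint
  have hl2 : 0 < l / 2 := half_pos hl
  refine (hasDerivAt_integral_of_dominated_loc_of_deriv_le
    (F := fun l t => (1 - Real.exp (-(l * t))) * μ t)
    (F' := fun l t => t * Real.exp (-(l * t)) * μ t)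
    (bound := fun t => (l / 2)⁻¹ * ‖(1 - Real.exp (-(l / 2 * t))) * μ t‖)
    (Ioi_mem_nhds (half_lt_self hl))
    (.of_forall fun x => (AEMeasurable.mul (by fun_prop) hμ).aestronglyMeasurable)
    (integrableOn_one_sub_exp_neg_mul hint hl.le)
    (AEMeasurable.mul (by fun_prop) hμ).aestronglyMeasurable ?_
    ((integrableOn_one_sub_exp_neg_mul hint hl2.le).norm.const_mul _) ?_).2
  · filter_upwards [ae_restrict_mem measurableSet_Ioi] with t ht x hx
    have ht0 : 0 < t := ht
    rw [norm_mul, norm_mul (1 - _), Real.norm_of_nonneg (by positivity),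
      Real.norm_of_nonneg (one_sub_exp_neg_mul_pos hl2 ht0).le, ← mul_assoc]
    exact mul_le_mul_of_nonneg_right (mul_exp_neg_mul_le_of_le hl2 (le_of_lt hx) ht0.le)
      (norm_nonneg _)
  · filter_upwards with t x _
    refine (((hasDerivAt_mul_const t).neg.exp.const_sub 1).mul_const (μ t)).congr_deriv ?_
    simp only [Pi.neg_apply]
    ring

end Bernstein

theorem karamata_integral_estimate_general {α b : ℝ} {φ φ' : ℝ → ℝ} (hα : α < 1) (hb : 1 < b)
    (hpos : ∀ l, 0 < l → 0 < φ l) (hderiv : ∀ l, 0 < l → HasDerivAt φ (φ' l) l)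
    (hφ' : ∀ l, 0 < l → 0 ≤ φ' l)
    (hA1 : Tendsto (fun l => φ' (l * b) / φ' l) atTop (𝓝 (b ^ (α / 2 - 1)))) :
    ∃ c : ℝ, 0 < c ∧ ∀ r, 0 < r → r < 1 →
      (∫ t in Ioo (0 : ℝ) r, φ (t ^ (-2 : ℝ))) ≤ c * r * φ (r ^ (-2 : ℝ)) := by
  have hb0 : 0 < b := one_pos.trans hb
  obtain ⟨γ, hγ, hγ2⟩ := exists_between (max_lt (by linarith) (by norm_num) : max (α / 2) 0 < 1 / 2)
  obtain ⟨hαγ, hγ0⟩ := max_lt_iff.1 hγ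
  have hmono : MonotoneOn φ (Ioi 0) := monotoneOn_of_hasDerivWithinAt_nonneg (convex_Ioi 0)
    (fun l hl => (hderiv l hl).continuousAt.continuousWithinAt)
    (fun l hl => (hderiv l (interior_subset hl)).hasDerivWithinAt)
    fun l hl => hφ' l (interior_subset hl)
  have hφ'_le : ∀ᶠ l in atTop, φ' (l * b) ≤ b ^ (γ - 1) * φ' l :=
    eventually_le_mul_of_tendsto_div (by positivity)
      (Real.rpow_lt_rpow_of_exponent_lt hb (by linarith))
      ((eventually_gt_atTop 0).mono hφ') hA1
  obtain ⟨C, hC, hφ_le⟩ := exists_apply_mul_le_add (q := b ^ γ) hb0 (by positivity) hmono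
    (fun l hl => (hpos l hl).le) hderiv <| hφ'_le.mono fun l hl => by
      rwa [Real.rpow_sub_one hb0.ne', div_mul_eq_mul_div, le_div_iff₀' hb0] at hl
  obtain ⟨K, hK, hscal⟩ := exists_weakUpperScaling_of_apply_mul_le_add hb hγ0 hC
    (hmono.mono (Ici_subset_Ioi.2 one_pos)) (hpos 1 one_pos)
    fun l hl => hφ_le l (one_pos.trans_le hl)
  have h2γ : 2 * γ < 1 := by linarith
  exact ⟨K / (1 - 2 * γ), div_pos hK (sub_pos.2 h2γ), fun r hr0 hr1 =>
    hscal.setIntegral_rpow_neg_le (fun l hl => (hpos l (one_pos.trans_le hl)).le) zero_le_two h2γ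
      hr0 hr1.le⟩

/-- Under (A-1) with `α ∈ [0,1)`, there is a constant `c > 0` such that
`∫₀^r φ(t⁻²) dt ≤ c r φ(r⁻²)` for every `r ∈ (0,1)`. -/
theorem karamata_integral_estimate
    (α : ℝ) (hα0 : 0 ≤ α) (hα1 : α < 1)
    (μ φ φ' : ℝ → ℝ)
    (hμpos : ∀ t, 0 < t → 0 < μ t)
    (hμdec : ∀ s t, 0 < s → s ≤ t → μ t ≤ μ s)
    (hμint : IntegrableOn (fun t => min 1 t * μ t) (Ioi 0))
    (hφ : ∀ l, 0 < l → φ l = ∫ t in Ioi (0:ℝ), (1 - Real.exp (-(l * t))) * μ t)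
    (hφ' : ∀ l, 0 < l → φ' l = ∫ t in Ioi (0:ℝ), t * Real.exp (-(l * t)) * μ t)
    (hA1 : ∀ x, 0 < x →
      Tendsto (fun l => φ' (l * x) / φ' l) atTop (𝓝 (x ^ (α / 2 - 1)))) :
    ∃ c : ℝ, 0 < c ∧ ∀ r, 0 < r → r < 1 →
      (∫ t in Ioo (0:ℝ) r, φ (t ^ (-2 : ℝ))) ≤ c * r * φ (r ^ (-2 : ℝ)) :=
  karamata_integral_estimate_general hα1 one_lt_two
    (fun l hl => (hφ l hl).symm ▸ bernsteinFunction_pos hμpos hμint hl)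
    (fun l hl => (hφ' l hl).symm ▸ (hasDerivAt_bernsteinFunction hμint hl).congr_of_eventuallyEq
      ((eventually_gt_nhds hl).mono hφ))
    (fun l hl => (hφ' l hl).symm ▸ setIntegral_nonneg measurableSet_Ioi fun t ht =>
      mul_nonneg (mul_nonneg (le_of_lt ht) (Real.exp_nonneg _)) (hμpos t ht).le)
    (hA1 2 two_pos)
end
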